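/- arXiv:2604.15266 — 5 statements merged into one kernel-verified Lean document; each statement's English description precedes it below -/
import Mathlib

section
/- Soundness of the incremental rule (Inc): let (ι, τ, β) be a safety problem over S and A ⊆ S. If A is an inductive invariant for (ι, τ), and the restricted problem (ι ∩ A, τ ∩ (A × A), β ∩ A) is safe, then (ι, τ, β) is safe. -/
variable {S : Type*}

def IsSafe (ι : Set S) (τ : Set (S × S)) (β : Set S) : Prop :=
  ¬ ∃ (n : ℕ) (σ : ℕ → S), (∀ i < n, (σ i, σ (i + 1)) ∈ τ) ∧ σ 0 ∈ ι ∧ σ n ∈ β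

def IsInductiveInv (ι : Set S) (τ : Set (S × S)) (I : Set S) : Prop :=
  ι ⊆ I ∧ ∀ s s', s ∈ I → (s, s') ∈ τ → s' ∈ I

/-- Soundness of the incremental rule (Inc): if `A` is an inductive invariant for `(ι, τ)`
and the restricted problem `(ι ∩ A, τ ∩ (A × A), β ∩ A)` is safe, then `(ι, τ, β)` is safe. -/
theorem safe_of_inc (ι β A : Set S) (τ : Set (S × S))
    (hInv : IsInductiveInv ι τ A)
    (hSafe : IsSafe (ι ∩ A) (τ ∩ A ×ˢ A) (β ∩ A)) :
    IsSafe ι τ β := by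
  rintro ⟨n, σ, hστ, h0, hn⟩
  have hA : ∀ i, i ≤ n → σ i ∈ A := by
    intro i
    induction i with
    | zero => exact fun _ => hInv.1 h0
    | succ k ih => exact fun hk => hInv.2 _ _ (ih (by omega)) (hστ k (by omega))
  exact hSafe ⟨n, σ, fun i hi => ⟨hστ i hi, hA i (by omega), hA (i + 1) (by omega)⟩,
    ⟨h0, hA 0 (by omega)⟩, ⟨hn, hA n le_rfl⟩⟩
end

section
/- Soundness of the backward incremental rule (B-Inc): let (ι, τ, β) be a safety problem over S and B ⊆ S. If β ⊆ B, B is backward-closed under τ (i.e., (s, s') ∈ τ and s' ∈ B imply s ∈ B), and the restricted problem (ι ∩ B, τ ∩ (B × B), β ∩ B) is safe, then (ι, τ, β) is safe. -/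
variable {S : Type*}

/-- Soundness of the backward incremental rule (B-Inc): if `β ⊆ B`, `B` is backward-closed
under `τ`, and the restricted problem `(ι ∩ B, τ ∩ (B × B), β ∩ B)` is safe, then
`(ι, τ, β)` is safe. -/
theorem safe_of_backward_inc (ι β B : Set S) (τ : Set (S × S))
    (hβ : β ⊆ B)
    (hbwd : ∀ s s', (s, s') ∈ τ → s' ∈ B → s ∈ B)
    (hSafe : IsSafe (ι ∩ B) (τ ∩ B ×ˢ B) (β ∩ B)) :
    IsSafe ι τ β := by
  rintro ⟨n, σ, hτ, h0, hn⟩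
  have hB : ∀ k ≤ n, σ k ∈ B := by
    intro k hk
    induction hk using Nat.decreasingInduction with
    | self => exact hβ hn
    | of_succ k hk ih => exact hbwd _ _ (hτ k hk) ih
  exact hSafe ⟨n, σ, fun i hi => ⟨hτ i hi, hB i hi.le, hB (i + 1) hi⟩,
    ⟨h0, hB 0 (Nat.zero_le n)⟩, ⟨hn, hB n le_rfl⟩⟩
end

section
/- Invariant combination for incremental forward proofs (the (Inc) case of Theorem 4.7): let (ι, τ, β) be a safety problem over S and A ⊆ S. If I₁ is a safe inductive invariant of (ι, τ, S \ A) (so in particular I₁ ⊆ A), and I₂ is a safe inductive invariant of the restricted problem (ι ∩ A, τ ∩ (A × A), β ∩ A), then I₁ ∩ I₂ is a safe inductive invariant of (ι, τ, β). -/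
variable {S : Type*}

def IsSafeInductiveInv (ι : Set S) (τ : Set (S × S)) (β : Set S) (I : Set S) : Prop :=
  IsInductiveInv ι τ I ∧ I ∩ β = ∅

/-- Invariant combination for incremental forward proofs (the (Inc) case of Theorem 4.7):
if `I₁` is a safe inductive invariant of `(ι, τ, S \ A)` and `I₂` is a safe inductive
invariant of `(ι ∩ A, τ ∩ (A × A), β ∩ A)`, then `I₁ ∩ I₂` is a safe inductive invariant
of `(ι, τ, β)`. -/
theorem inc_invariant_combination (ι β A I₁ I₂ : Set S) (τ : Set (S × S))
    (h1 : IsSafeInductiveInv ι τ Aᶜ I₁)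
    (h2 : IsSafeInductiveInv (ι ∩ A) (τ ∩ A ×ˢ A) (β ∩ A) I₂) :
    IsSafeInductiveInv ι τ β (I₁ ∩ I₂) := by
  obtain ⟨⟨hi1, ht1⟩, hs1⟩ := h1
  obtain ⟨⟨hi2, ht2⟩, hs2⟩ := h2
  have hA : ∀ s, s ∈ I₁ → s ∈ A := by
    intro s hs
    by_contra hn
    have : s ∈ I₁ ∩ Aᶜ := ⟨hs, hn⟩
    rw [hs1] at this
    exact this
  refine ⟨⟨fun s hs => ⟨hi1 hs, hi2 ⟨hs, hA s (hi1 hs)⟩⟩, ?_⟩, ?_⟩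
  · intro s s' hs hst
    have h' := ht1 s s' hs.1 hst
    exact ⟨h', ht2 s s' hs.2 ⟨hst, hA s hs.1, hA s' h'⟩⟩
  · apply Set.eq_empty_of_forall_notMem
    intro s hs
    have : s ∈ I₂ ∩ (β ∩ A) := ⟨hs.1.2, hs.2, hA s hs.1.1⟩
    rw [hs2] at this
    exact this
end

section
/- Forward-backward invariant combination: let (ι, τ, β) be a safety problem over S and B, F ⊆ S. Suppose β ⊆ B; B is backward-closed under τ (i.e., (s, s') ∈ τ and s' ∈ B imply s ∈ B); and F is a safe inductive invariant of the restricted problem (ι ∩ B, τ ∩ (B × B), β ∩ B). Then (S \ B) ∪ F is a safe inductive invariant of (ι, τ, β). (This is the invariant construction Inv⇌ applied to a proof consisting of one backward step followed by one forward step, as in the proofs of Sections 2.1–2.2.) -/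
variable {S : Type*}

/-- Forward-backward invariant combination: if `β ⊆ B`, `B` is backward-closed under `τ`,
and `F` is a safe inductive invariant of `(ι ∩ B, τ ∩ (B × B), β ∩ B)`, then `(S \ B) ∪ F`
is a safe inductive invariant of `(ι, τ, β)`. -/
theorem forward_backward_invariant_combination (ι β B F : Set S) (τ : Set (S × S))
    (hβ : β ⊆ B)
    (hbwd : ∀ s s', (s, s') ∈ τ → s' ∈ B → s ∈ B)
    (hF : IsSafeInductiveInv (ι ∩ B) (τ ∩ B ×ˢ B) (β ∩ B) F) :
    IsSafeInductiveInv ι τ β (Bᶜ ∪ F) := by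
  obtain ⟨⟨hi, hstep⟩, hsafe⟩ := hF
  refine ⟨⟨?_, ?_⟩, ?_⟩
  · intro s hs
    by_cases hB : s ∈ B
    · exact Or.inr (hi ⟨hs, hB⟩)
    · exact Or.inl hB
  · intro s s' hs ht
    by_cases hB : s' ∈ B
    · have hsB := hbwd s s' ht hB
      rcases hs with hs | hs
      · exact absurd hsB hs
      · exact Or.inr (hstep s s' hs ⟨ht, hsB, hB⟩)
    · exact Or.inl hB
  · rw [Set.eq_empty_iff_forall_notMem] at hsafe ⊢
    rintro s ⟨hs | hs, hb⟩
    · exact hs (hβ hb)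
    · exact hsafe s ⟨hs, hb, hβ hb⟩
end

section
/- Every coordinate of the alternating Boolean formula is essential: define Boolean functions fₙ : (Fin n → Bool) → Bool for n ≥ 1 recursively by f₁(v) = v(0) and f_{n+1}(v) = v(0) && !(fₙ(v ∘ succ)), so that fₙ(v) = v₁ ∧ (¬v₂ ∨ (v₃ ∧ (¬v₄ ∨ ⋯))). Then for every n ≥ 1 and every index i ∈ Fin n, there exist assignments u, u' : Fin n → Bool that agree on all coordinates except i and satisfy fₙ(u) ≠ fₙ(u'). In particular, fₙ cannot be expressed as a Boolean function of fewer than n of its coordinates. -/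
/-- The alternating Boolean function: `f 0 v = v 0` (i.e. `f₁`) and
`f (n+1) v = v 0 && !(f n (v ∘ Fin.succ))` (i.e. `f_{n+2}`), so that `f` at size `n + 1`
computes `v₁ ∧ (¬v₂ ∨ (v₃ ∧ (¬v₄ ∨ ⋯)))`. -/
def altBool : (n : ℕ) → (Fin (n + 1) → Bool) → Bool
  | 0, v => v 0
  | n + 1, v => v 0 && !(altBool n (fun i => v i.succ))

theorem altBool_false (n : ℕ) : altBool n (fun _ => false) = false := by
  cases n <;> simp [altBool]

/-- Every coordinate of the alternating Boolean formula is essential: for every `n ≥ 1`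
(here the function of arity `n + 1`) and every index `i`, there exist assignments `u, u'`
that agree on all coordinates except `i` and give different values to the function. -/
theorem altBool_depends_on_every_coordinate (n : ℕ) (i : Fin (n + 1)) :
    ∃ u u' : Fin (n + 1) → Bool,
      (∀ j : Fin (n + 1), j ≠ i → u j = u' j) ∧ altBool n u ≠ altBool n u' := by
  induction n with
  | zero =>
    refine ⟨fun _ => true, fun _ => false, fun j hj => absurd (by ext; omega) hj, ?_⟩
    simp [altBool]
  | succ n ih =>
    refine Fin.cases ?_ (fun i => ?_) i
    · refine ⟨Fin.cons true (fun _ => false), fun _ => false, fun j hj => ?_, ?_⟩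
      · obtain ⟨k, rfl⟩ := Fin.exists_succ_eq.mpr hj
        simp
      · simp [altBool, altBool_false]
    · obtain ⟨u, u', h, hne⟩ := ih i
      refine ⟨Fin.cons true u, Fin.cons true u', fun j hj => ?_, ?_⟩
      · induction j using Fin.cases with
        | zero => simp
        | succ k =>
          simp only [Fin.cons_succ]
          exact h k (fun e => hj (congrArg Fin.succ e))
      · simpa [altBool] using hne
end
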